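/- For every natural number k, the formal power series Σ_{n≥1} (m_{n,k}/n!) q^n and Σ_{n≥1} (p_{n,k}/n!) q^n both lie in the algebra 𝒜. -/

import Mathlib

/-- `Y = Σ_{n≥1} (n^{n-1}/n!) qⁿ` as a formal power series over `ℚ`. -/
noncomputable def Yq : PowerSeries ℚ :=
  PowerSeries.mk fun n => if n = 0 then 0 else (n : ℚ) ^ (n - 1) / n.factorial

/-- `Z = Σ_{n≥1} (nⁿ/n!) qⁿ` as a formal power series over `ℚ`. -/
noncomputable def Zq : PowerSeries ℚ :=
  PowerSeries.mk fun n => if n = 0 then 0 else (n : ℚ) ^ n / n.factorial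

open Classical in
/-- `m_{n,k} = Σ_T Σ_{(a,b)} l_T(a,b)ᵏ`, summed over all Cayley trees `T` on `n` vertices
(connected acyclic simple graphs on `{1,…,n}`) and all ordered pairs `(a,b)` of vertices,
where `l_T(a,b)` is the graph distance. -/
noncomputable def mCayley (n k : ℕ) : ℕ :=
  ∑ G ∈ Finset.univ.filter (fun G : SimpleGraph (Fin n) => G.Connected ∧ G.IsAcyclic),
    ∑ a : Fin n, ∑ b : Fin n, (G.dist a b) ^ k

open Classical in
/-- `p_{n,k} = Σ_T Σ_{(a,b)} C(l_T(a,b), k)`, summed over all Cayley trees `T` on `n`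
vertices and all ordered pairs `(a,b)` of vertices. -/
noncomputable def pCayley (n k : ℕ) : ℕ :=
  ∑ G ∈ Finset.univ.filter (fun G : SimpleGraph (Fin n) => G.Connected ∧ G.IsAcyclic),
    ∑ a : Fin n, ∑ b : Fin n, (G.dist a b).choose k

section dendro
open Finset
set_option linter.unusedSectionVars false

noncomputable def NN {α : Type*} [Fintype α] [DecidableEq α] (D R : Finset α) (g : α → α) : Finset (α → α) :=
  by classical exact Finset.univ.filter (fun f => (∀ x, x ∉ D → f x = g x) ∧ ∀ x ∈ D, f x ∈ D ∪ R ∧ ∃ k, f^[k] x ∈ R)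

lemma mem_NN {α : Type*} [Fintype α] [DecidableEq α] (D R : Finset α) (g f : α → α) :
    f ∈ NN D R g ↔ (∀ x, x ∉ D → f x = g x) ∧ ∀ x ∈ D, f x ∈ D ∪ R ∧ ∃ k, f^[k] x ∈ R := by
  simp [NN]

lemma binom_aux (u m : ℕ) :
    ∑ j ∈ range (u + 2), (u+1).choose j * (m ^ j * (j * (u+1) ^ (u + 1 - j))) = (u+1) * (m * (u + 1 + m) ^ u) := by
  rw [sum_range_succ']
  simp only [zero_mul, mul_zero, add_zero]
  rw [add_comm (u+1) m, add_pow, mul_sum, mul_sum]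
  refine sum_congr rfl fun j hj => ?_
  have h := Nat.add_one_mul_choose_eq u j
  rw [Nat.add_sub_add_right]
  simp only [Nat.cast_id]
  calc _ = ((u+1).choose (j+1) * (j+1)) * (m^(j+1) * (u+1)^(u-j)) := by ring
    _ = _ := by rw [← h]; ring

lemma card_NN {α : Type*} [Fintype α] [DecidableEq α] (n : ℕ) : ∀ (D R : Finset α) (g : α → α), D.card = n → Disjoint D R →
    (NN D R g).card * (D.card + R.card) = R.card * (D.card + R.card) ^ D.card := by
  induction n using Nat.strong_induction_on with
  | _ n ih =>
  intro D R g hn hDR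
  rcases D.eq_empty_or_nonempty with rfl | hD
  · have : NN ∅ R g = {g} := by
      ext f
      simp [mem_NN, funext_iff]
    simp [this]
  -- reduce to nonempty D
  obtain ⟨u, hu⟩ : ∃ u, D.card = u + 1 := ⟨D.card - 1, by have := hD.card_pos; omega⟩
  classical
  let T : Finset (Σ _ : Finset α, α → α) :=
    D.powerset.sigma (fun S => Fintype.piFinset (fun x => if x ∈ S then R else {g x}))
  let φ : (α → α) → (Σ _ : Finset α, α → α) := fun f =>
    ⟨D.filter (fun x => f x ∈ R), fun x => if x ∈ D.filter (fun x => f x ∈ R) then f x else g x⟩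
  have hmap : ∀ f ∈ NN D R g, φ f ∈ T := by
    intro f hf
    simp only [T, φ, mem_sigma, mem_powerset, filter_subset, true_and, Fintype.mem_piFinset]
    intro x
    split_ifs with h
    · exact (mem_filter.1 h).2
    · simp
  have key : ∀ p ∈ T, ((NN D R g).filter (fun f => φ f = p)) = NN (D \ p.1) p.1 p.2 := by
    rintro ⟨S, h⟩ hp
    simp only [T, mem_sigma, mem_powerset, Fintype.mem_piFinset] at hp
    obtain ⟨hS, hh⟩ := hp
    have hhS : ∀ x ∈ S, h x ∈ R := fun x hx => by have := hh x; rwa [if_pos hx] at this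
    have hhg : ∀ x ∉ S, h x = g x := fun x hx => by have := hh x; rw [if_neg hx] at this; simpa using this
    ext f
    simp only [mem_filter, mem_NN, φ, Sigma.mk.injEq, heq_eq_eq]
    constructor
    · rintro ⟨⟨h1, h2⟩, h3, h4⟩
      have hSf : ∀ x, x ∈ S ↔ x ∈ D ∧ f x ∈ R := fun x => by rw [← h3]; simp
      simp only [← hSf] at h4
      refine ⟨fun x hx => ?_, fun x hx => ?_⟩
      · rw [← h4]
        dsimp only
        split_ifs with hxS
        · rfl
        · exact h1 x (fun hxD => hx (by simp [hxD, hxS]))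
      · rw [mem_sdiff] at hx
        refine ⟨?_, ?_⟩
        · have := (h2 x hx.1).1
          have h5 := hSf x
          have h6 := hS
          simp only [mem_union, mem_sdiff] at this ⊢
          tauto
        · obtain ⟨k, hk⟩ := (h2 x hx.1).2
          have : ∀ k x, x ∈ D → f^[k] x ∈ R → ∃ j, f^[j] x ∈ S := by
            intro k
            induction k with
            | zero => intro x hx hk; exact absurd hk (disjoint_left.1 hDR hx)
            | succ k ihk =>
              intro x hx hk
              by_cases hfx : f x ∈ R
              · exact ⟨0, (hSf x).2 ⟨hx, hfx⟩⟩
              · have : f x ∈ D := by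
                  have := (h2 x hx).1
                  simp only [mem_union] at this
                  tauto
                obtain ⟨j, hj⟩ := ihk (f x) this hk
                exact ⟨j+1, hj⟩
          exact this k x hx.1 hk
    · rintro ⟨h1, h2⟩
      have hfS : ∀ x ∈ S, f x = h x := fun x hx => h1 x (by simp [hx])
      have h3 : D.filter (fun x => f x ∈ R) = S := by
        ext x
        simp only [mem_filter]
        constructor
        · rintro ⟨hx, hfx⟩
          by_contra hxS
          have := (h2 x (by simp [hx, hxS])).1
          have : f x ∈ D := by
            simp only [mem_union, mem_sdiff] at this
            rcases this with h | h
            · exact h.1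
            · exact hS h
          exact disjoint_left.1 hDR this hfx
        · intro hx
          exact ⟨hS hx, by rw [hfS x hx]; exact hhS x hx⟩
      refine ⟨⟨fun x hx => ?_, fun x hx => ?_⟩, h3, ?_⟩
      · rw [h1 x (by simp [hx]), hhg x (fun h => hx (hS h))]
      · by_cases hxS : x ∈ S
        · have : f x ∈ R := by rw [hfS x hxS]; exact hhS x hxS
          exact ⟨mem_union_right _ this, 1, this⟩
        · obtain ⟨h5, k, hk⟩ := h2 x (by simp [hx, hxS])
          refine ⟨?_, k+1, ?_⟩
          · simp only [mem_union, mem_sdiff] at h5 ⊢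
            rcases h5 with h | h
            · exact Or.inl h.1
            · exact Or.inl (hS h)
          · rw [Function.iterate_succ_apply', hfS _ hk]; exact hhS _ hk
      · have hSf : ∀ x, x ∈ S ↔ x ∈ D ∧ f x ∈ R := fun x => by rw [← h3]; simp
        simp only [← hSf]
        funext x
        split_ifs with hxS
        · exact hfS x hxS
        · exact (hhg x hxS).symm
  have hterm : ∀ p ∈ T, (NN (D \ p.1) p.1 p.2).card * (u+1) = p.1.card * (u+1) ^ (u + 1 - p.1.card) := by
    rintro ⟨S, h⟩ hp
    simp only [T, mem_sigma, mem_powerset, Fintype.mem_piFinset] at hp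
    obtain ⟨hS, hh⟩ := hp
    have hc : (D \ S).card = u + 1 - S.card := by rw [card_sdiff_of_subset hS, hu]
    have hle := card_le_card hS
    rcases S.eq_empty_or_nonempty with rfl | hne
    · have : NN (D \ ∅) ∅ h = ∅ := by
        obtain ⟨x, hx⟩ := hD
        ext f
        simp only [mem_NN, notMem_empty, iff_false]
        rintro ⟨_, h2⟩
        obtain ⟨_, k, hk⟩ := h2 x (by simpa using hx)
        exact hk
      rw [this]; simp
    · have := ih (D \ S).card (by have := hne.card_pos; omega) (D \ S) S h rfl sdiff_disjoint
      have e : (D \ S).card + S.card = u + 1 := by omega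
      rw [e, hc] at this
      exact this
  have hsum : (NN D R g).card * (u+1) = (u+1) * (R.card * (u + 1 + R.card) ^ u) := by
    rw [card_eq_sum_card_fiberwise hmap, sum_mul]
    rw [sum_congr rfl (fun p hp => by rw [key p hp, hterm p hp])]
    simp only [T]
    rw [sum_sigma]
    simp only [sum_const, smul_eq_mul]
    have : ∀ S ∈ D.powerset, (Fintype.piFinset (fun x => if x ∈ S then R else {g x})).card = R.card ^ S.card := by
      intro S _
      rw [Fintype.card_piFinset]
      have : ∀ x, (if x ∈ S then R else {g x}).card = if x ∈ S then R.card else 1 := by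
        intro x; split_ifs <;> simp
      simp [this]
    rw [sum_congr rfl (fun S hS => by rw [this S hS])]
    rw [sum_powerset_apply_card (fun j => R.card ^ j * (j * (u+1) ^ (u+1-j)))]
    rw [hu, ← binom_aux]
    simp
  have := Nat.eq_of_mul_eq_mul_right (Nat.succ_pos u) (hsum.trans (mul_comm _ _))
  rw [this, hu]; ring

section treefun
variable {V : Type*} [Fintype V] [DecidableEq V]

def RT (a : V) (f : V → V) : Prop := f a = a ∧ ∀ x, ∃ k, f^[k] x = a

noncomputable def dep (a : V) (f : V → V) (x : V) : ℕ := sInf {k | f^[k] x = a}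

def TG (f : V → V) : SimpleGraph V := SimpleGraph.fromRel (fun x y => f x = y)

lemma dep_spec {a : V} {f : V → V} (h : RT a f) (x : V) : f^[dep a f x] x = a := Nat.sInf_mem (h.2 x)
lemma dep_le {a : V} {f : V → V} {x : V} {k : ℕ} (h : f^[k] x = a) : dep a f x ≤ k := Nat.sInf_le h

lemma dep_self {a : V} {f : V → V} : dep a f a = 0 := Nat.le_zero.1 (dep_le rfl)

lemma dep_succ {a : V} {f : V → V} (h : RT a f) {x : V} (hx : x ≠ a) : dep a f x = dep a f (f x) + 1 := by
  apply le_antisymm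
  · exact dep_le (by rw [Function.iterate_succ_apply]; exact dep_spec h _)
  · have := dep_spec h x
    rcases hd : dep a f x with _ | d
    · rw [hd] at this; exact absurd this hx
    · rw [hd] at this
      have := dep_le (a := a) (f := f) (x := f x) (k := d) this
      omega

lemma TG_adj {f : V → V} {x y : V} : (TG f).Adj x y ↔ x ≠ y ∧ (f x = y ∨ f y = x) := by
  simp [TG]

lemma RT_ne {a : V} {f : V → V} (h : RT a f) {x : V} (hx : x ≠ a) : f x ≠ x := by
  intro e
  have := dep_succ h hx
  rw [e] at this; omega

lemma TG_walk {a : V} {f : V → V} (h : RT a f) : ∀ (n : ℕ) (x : V), dep a f x = n → ∃ w : (TG f).Walk x a, w.length = n := by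
  intro n
  induction n with
  | zero =>
    intro x hx
    have := dep_spec h x
    rw [hx] at this
    obtain rfl : x = a := this
    exact ⟨.nil, rfl⟩
  | succ n ih =>
    intro x hx
    have hxa : x ≠ a := by rintro rfl; rw [dep_self] at hx; omega
    obtain ⟨w, hw⟩ := ih (f x) (by have := dep_succ h hxa; omega)
    exact ⟨.cons (TG_adj.2 ⟨(RT_ne h hxa).symm, Or.inl rfl⟩) w, by simp [hw]⟩

lemma TG_conn {a : V} {f : V → V} (h : RT a f) : (TG f).Connected := by
  have : Nonempty V := ⟨a⟩
  refine ⟨fun x y => ?_⟩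
  obtain ⟨w, _⟩ := TG_walk h _ x rfl
  obtain ⟨w', _⟩ := TG_walk h _ y rfl
  exact ⟨w.append w'.reverse⟩

lemma TG_adj_dep {a : V} {f : V → V} (h : RT a f) {x y : V} (hxy : (TG f).Adj x y) :
    dep a f x ≤ dep a f y + 1 := by
  obtain ⟨hne, h1 | h1⟩ := TG_adj.1 hxy
  · by_cases hx : x = a
    · rw [hx, dep_self]; omega
    · rw [dep_succ h hx, h1]
  · by_cases hy : y = a
    · exfalso; rw [hy, h.1] at h1; exact hne (h1.symm.trans hy.symm)
    · have := dep_succ h hy; rw [h1] at this; omega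

lemma TG_dist {a : V} {f : V → V} (h : RT a f) (x : V) : (TG f).dist a x = dep a f x := by
  rw [SimpleGraph.dist_comm]
  apply le_antisymm
  · obtain ⟨w, hw⟩ := TG_walk h _ x rfl
    rw [← hw]; exact SimpleGraph.dist_le w
  · obtain ⟨w, hw⟩ := (TG_conn h).exists_walk_length_eq_dist x a
    rw [← hw]
    clear hw
    have : ∀ x y (w : (TG f).Walk x y), dep a f x ≤ dep a f y + w.length := by
      intro x y w
      induction w with
      | nil => simp
      | cons hh p ih =>
        have := TG_adj_dep h hh
        simp only [SimpleGraph.Walk.length_cons]; omega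
    have := this x a w
    rw [dep_self] at this; omega

lemma TG_tree {a : V} {f : V → V} (h : RT a f) : (TG f).IsTree := by
  rw [SimpleGraph.isTree_iff_connected_and_card]
  refine ⟨TG_conn h, ?_⟩
  apply le_antisymm _ (TG_conn h).card_vert_le_card_edgeSet_add_one
  have hsub : (TG f).edgeSet ⊆ ((univ.erase a).image (fun x => s(x, f x)) : Finset (Sym2 V)) := by
    intro e
    induction e using Sym2.ind with
    | _ x y =>
    intro he
    rw [SimpleGraph.mem_edgeSet, TG_adj] at he
    simp only [coe_image, Set.mem_image, coe_erase, coe_univ, Set.mem_sdiff, Set.mem_univ, true_and, Set.mem_singleton_iff]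
    obtain ⟨hne, h1 | h1⟩ := he
    · refine ⟨x, ?_, by rw [h1]⟩
      rintro rfl; exact hne (h.1.symm.trans h1)
    · refine ⟨y, ?_, by rw [h1, Sym2.eq_swap]⟩
      rintro rfl; exact hne (h1.symm.trans h.1)
  have h1 : Nat.card (TG f).edgeSet ≤ ((univ.erase a).image (fun x => s(x, f x))).card := by
    rw [← Set.ncard_coe_finset]
    exact Set.ncard_le_ncard hsub
  have h2 := card_image_le (s := univ.erase a) (f := fun x => s(x, f x))
  rw [card_erase_of_mem (mem_univ a), card_univ] at h2
  have : 0 < Fintype.card V := Fintype.card_pos_iff.2 ⟨a⟩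
  rw [Nat.card_eq_fintype_card (α := V)]
  omega

lemma TG_inj {a : V} {f g : V → V} (hf : RT a f) (hg : RT a g) (e : TG f = TG g) : f = g := by
  funext x
  by_cases hx : x = a
  · rw [hx, hf.1, hg.1]
  have hd : ∀ y, dep a f y = dep a g y := fun y => by rw [← TG_dist hf, ← TG_dist hg, e]
  have : (TG g).Adj x (f x) := by
    rw [← e]; exact TG_adj.2 ⟨(RT_ne hf hx).symm, Or.inl rfl⟩
  obtain ⟨_, h1 | h1⟩ := TG_adj.1 this
  · exact h1.symm
  · exfalso
    have h2 := dep_succ hf hx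
    rw [hd, hd] at h2
    by_cases hfa : f x = a
    · rw [hfa, hg.1] at h1; exact hx h1.symm
    · have h3 := dep_succ hg hfa
      rw [h1] at h3; omega

lemma TG_surj (a : V) {G : SimpleGraph V} (hG : G.IsTree) : ∃ f, RT a f ∧ TG f = G := by
  have hc := hG.connected
  have hex : ∀ x, ∃ y, (x = a → y = a) ∧ (x ≠ a → G.Adj x y ∧ G.dist y a < G.dist x a) := by
    intro x
    by_cases hx : x = a
    · exact ⟨a, fun _ => rfl, fun h => absurd hx h⟩
    · obtain ⟨w, hw⟩ := hc.exists_walk_length_eq_dist x a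
      cases w with
      | nil => exact absurd rfl hx
      | @cons _ y _ hh p =>
        refine ⟨y, fun h => absurd h hx, fun _ => ⟨hh, ?_⟩⟩
        have := SimpleGraph.dist_le p
        simp only [SimpleGraph.Walk.length_cons] at hw
        omega
  choose f hf1 hf2 using hex
  have hRT : RT a f := by
    refine ⟨hf1 a rfl, ?_⟩
    have : ∀ n x, G.dist x a ≤ n → ∃ k, f^[k] x = a := by
      intro n
      induction n with
      | zero => intro x hx; exact ⟨0, hc.dist_eq_zero_iff.1 (Nat.le_zero.1 hx)⟩
      | succ n ih =>
        intro x hx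
        by_cases hxa : x = a
        · exact ⟨0, hxa⟩
        · obtain ⟨k, hk⟩ := ih (f x) (by have := (hf2 x hxa).2; omega)
          exact ⟨k+1, hk⟩
    exact fun x => this _ x le_rfl
  refine ⟨f, hRT, ?_⟩
  have hle : TG f ≤ G := by
    intro x y hxy
    obtain ⟨hne, h1 | h1⟩ := TG_adj.1 hxy
    · have hx : x ≠ a := by rintro rfl; exact hne (hRT.1.symm.trans h1)
      rw [← h1]; exact (hf2 x hx).1
    · have hy : y ≠ a := by rintro rfl; exact hne (h1.symm.trans hRT.1)
      rw [← h1]; exact (hf2 y hy).1.symm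
  exact le_antisymm hle ((SimpleGraph.isTree_iff_minimal_connected.1 hG).2 (TG_conn hRT) hle)

open Classical in
lemma sum_tree {M : Type*} [AddCommMonoid M] (a b : V) (h : ℕ → M) :
    ∑ G ∈ Finset.univ.filter (fun G : SimpleGraph V => G.Connected ∧ G.IsAcyclic), h (G.dist a b)
      = ∑ f ∈ Finset.univ.filter (fun f : V → V => RT a f), h (dep a f b) := by
  symm
  refine Finset.sum_bij (fun f _ => TG f) ?_ ?_ ?_ ?_
  · intro f hf
    have := TG_tree (mem_filter.1 hf).2
    simp only [mem_filter, mem_univ, true_and]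
    exact ⟨this.connected, this.isAcyclic⟩
  · intro f hf g hg e
    exact TG_inj (mem_filter.1 hf).2 (mem_filter.1 hg).2 e
  · intro G hG
    obtain ⟨f, hf, e⟩ := TG_surj a (G := G) ⟨(mem_filter.1 hG).2.1, (mem_filter.1 hG).2.2⟩
    exact ⟨f, by simp [hf], e⟩
  · intro f hf
    rw [TG_dist (mem_filter.1 hf).2]

end treefun

open Classical in
lemma count_aux {V : Type*} [Fintype V] [DecidableEq V] (l : ℕ) :
    (Finset.univ.filter (fun p : V × V × (V → V) => RT p.1 p.2.2 ∧ dep p.1 p.2.2 p.2.1 = l)).card * Fintype.card V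
      = (Fintype.card V).descFactorial (l+1) * ((l+1) * (Fintype.card V) ^ (Fintype.card V - (l+1))) := by
  set n := Fintype.card V with hn
  let φ : V × V × (V → V) → (Fin (l+1) → V) := fun p i => p.2.2^[i] p.2.1
  let T : Finset (Fin (l+1) → V) := univ.filter (fun v => Function.Injective v)
  have hT : T.card = n.descFactorial (l+1) := by
    have h1 : T.card = Fintype.card {v : Fin (l+1) → V // Function.Injective v} := by
      rw [Fintype.card_subtype]
    rw [h1, Fintype.card_congr (Equiv.subtypeInjectiveEquivEmbedding (Fin (l+1)) V), Fintype.card_embedding_eq]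
    simp [hn]
  have hmap : ∀ p ∈ Finset.univ.filter (fun p : V × V × (V → V) => RT p.1 p.2.2 ∧ dep p.1 p.2.2 p.2.1 = l), φ p ∈ T := by
    rintro ⟨a, b, f⟩ hp
    simp only [mem_filter, mem_univ, true_and] at hp
    obtain ⟨hf, hd⟩ := hp
    simp only [T, mem_filter, mem_univ, true_and, φ]
    have key : ∀ i j : ℕ, i < j → j ≤ l → f^[i] b ≠ f^[j] b := by
      intro i j hij hj e
      have h1 : f^[l - j + i] b = a := by
        rw [Function.iterate_add_apply, e, ← Function.iterate_add_apply, Nat.sub_add_cancel hj, ← hd]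
        exact dep_spec hf b
      have := dep_le h1
      omega
    intro i j e
    by_contra hne
    rcases lt_or_gt_of_ne hne with h | h
    · exact key i j h (by omega) e
    · exact key j i h (by omega) e.symm
  have hfib : ∀ v ∈ T, ((Finset.univ.filter (fun p : V × V × (V → V) => RT p.1 p.2.2 ∧ dep p.1 p.2.2 p.2.1 = l)).filter
      (fun p => φ p = v)).card * n = (l+1) * n ^ (n - (l+1)) := by
    intro v hv
    have hv : Function.Injective v := by simpa [T] using hv
    let R : Finset V := univ.image v
    have hR : R.card = l + 1 := by
      rw [card_image_of_injective _ hv]; simp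
    let nx : Fin (l+1) → Fin (l+1) := fun i => ⟨min (i+1) l, by omega⟩
    let g : V → V := fun x => if h : ∃ i, v i = x then v (nx h.choose) else x
    have hg : ∀ i, g (v i) = v (nx i) := by
      intro i
      have h : ∃ j, v j = v i := ⟨i, rfl⟩
      simp only [g, dif_pos h]
      rw [hv h.choose_spec]
    have hcR : (Rᶜ).card + R.card = n := by rw [card_compl]; have := card_le_univ R; omega
    have hN := card_NN (Rᶜ).card Rᶜ R g rfl disjoint_compl_left
    rw [hcR] at hN
    have e1 : (Rᶜ).card = n - (l+1) := by omega
    rw [e1, hR] at hN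
    rw [← hN]
    congr 1
    have hmemR : ∀ x, x ∈ R ↔ ∃ i, v i = x := by intro x; simp [R]
    refine (Finset.card_bij (fun f _ => (v (Fin.last l), v 0, f)) ?_ ?_ ?_).symm
    · intro f hf
      rw [mem_NN] at hf
      obtain ⟨h1, h2⟩ := hf
      have hfv : ∀ i, f (v i) = v (nx i) := by
        intro i
        rw [h1 _ (by simp [R]), hg]
      have hit : ∀ (k : ℕ) (hk : k < l + 1), f^[k] (v 0) = v ⟨k, hk⟩ := by
        intro k
        induction k with
        | zero => intro hk; rfl
        | succ k ih =>
          intro hk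
          rw [Function.iterate_succ_apply', ih (by omega), hfv]
          congr 1
          ext
          simp only [nx]; omega
      have hroot : f (v (Fin.last l)) = v (Fin.last l) := by
        rw [hfv]; congr 1; ext; simp [nx]
      have hreach : ∀ i, ∃ k, f^[k] (v i) = v (Fin.last l) := by
        intro i
        refine ⟨l - i, ?_⟩
        have h3 := hit i i.2
        have h4 : v i = f^[(i:ℕ)] (v 0) := h3.symm
        rw [h4, ← Function.iterate_add_apply, Nat.sub_add_cancel (by omega), hit l (by omega)]
        rfl
      have hRT : RT (v (Fin.last l)) f := by
        refine ⟨hroot, fun x => ?_⟩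
        have : ∃ k, f^[k] x ∈ R := by
          by_cases hx : x ∈ R
          · exact ⟨0, hx⟩
          · exact (h2 x (by simpa using hx)).2
        obtain ⟨k, hk⟩ := this
        obtain ⟨i, hi⟩ := (hmemR _).1 hk
        obtain ⟨j, hj⟩ := hreach i
        exact ⟨j + k, by rw [Function.iterate_add_apply, ← hi, hj]⟩
      simp only [mem_filter, mem_univ, true_and, φ]
      refine ⟨⟨hRT, ?_⟩, ?_⟩
      · apply le_antisymm
        · exact dep_le (hit l (by omega))
        · by_contra hlt
          push Not at hlt
          have h3 := dep_spec hRT (v 0)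
          rw [hit _ (by omega)] at h3
          have := congrArg Fin.val (hv h3)
          simp at this
          omega
      · funext i
        exact hit i i.2
    · intro f _ f' _ e
      simpa using e
    · rintro ⟨a, b, f⟩ hp
      simp only [mem_filter, mem_univ, true_and, φ] at hp
      obtain ⟨⟨hf, hd⟩, hφ⟩ := hp
      have hvi : ∀ i : Fin (l+1), v i = f^[(i:ℕ)] b := fun i => by rw [← hφ]
      have hlast : v (Fin.last l) = a := by
        rw [hvi, ← dep_spec hf b, hd]; rfl
      have hzero : v 0 = b := by rw [hvi]; rfl
      refine ⟨f, ?_, by rw [hlast, hzero]⟩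
      rw [mem_NN]
      refine ⟨fun x hx => ?_, fun x hx => ⟨?_, ?_⟩⟩
      · have hx : x ∈ R := by simpa using hx
        obtain ⟨i, rfl⟩ := (hmemR _).1 hx
        rw [hg]
        by_cases hi : i = Fin.last l
        · have : nx i = Fin.last l := by rw [hi]; ext; simp [nx]
          rw [this, hi, hlast, hf.1]
        · have h3 : (i : ℕ) < l := by
            have := i.2
            have : (i:ℕ) ≠ l := fun h => hi (Fin.ext h)
            omega
          rw [hvi, hvi, ← Function.iterate_succ_apply' f]
          congr 1
          simp only [nx]
          congr 1
          omega
      · simp [em']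
      · obtain ⟨k, hk⟩ := hf.2 x
        exact ⟨k, by rw [hk, ← hlast]; simp [R]⟩
  rw [card_eq_sum_card_fiberwise hmap, sum_mul, sum_congr rfl hfib, sum_const, hT, smul_eq_mul]
section series
open Polynomial in
lemma abel_poly (N : ℕ) :
    ∑ k ∈ range (N+1), C ((N.choose k : ℚ) * ((k:ℚ)+1) ^ (k-1)) * (X + C ((N:ℚ) - k)) ^ (N - k)
      = (X + C ((N:ℚ)+1)) ^ N := by
  induction N with
  | zero => simp
  | succ N ih =>
    set P : ℚ[X] := ∑ k ∈ range (N+1+1), C (((N+1).choose k : ℚ) * ((k:ℚ)+1) ^ (k-1)) * (X + C (((N+1:ℕ):ℚ) - k)) ^ (N + 1 - k) with hP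
    set Q : ℚ[X] := (X + C (((N+1:ℕ):ℚ)+1)) ^ (N+1) with hQ
    have hd : derivative (P - Q) = 0 := by
      have h1 := congrArg (fun p => C ((N:ℚ)+1) * p.comp (X + 1)) ih
      rw [derivative_sub, sub_eq_zero]
      have e2 : derivative Q = C ((N:ℚ)+1) * ((X + C ((N:ℚ)+1)) ^ N).comp (X + 1) := by
        rw [hQ, derivative_X_add_C_pow]
        simp only [pow_comp, add_comp, X_comp, C_comp, Nat.add_sub_cancel]
        push_cast
        simp only [map_add, map_natCast, map_one]
        ring
      rw [e2, ← h1]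
      rw [hP, sum_range_succ, derivative_add]
      have e3 : derivative (C (((N+1).choose (N+1) : ℚ) * (((N+1:ℕ):ℚ)+1) ^ (N+1-1)) * (X + C (((N+1:ℕ):ℚ) - (N+1:ℕ))) ^ (N + 1 - (N+1))) = (0 : ℚ[X]) := by
        rw [Nat.sub_self, pow_zero, mul_one, derivative_C]
      rw [e3, add_zero, derivative_sum]
      rw [Polynomial.sum_comp, mul_sum]
      refine sum_congr rfl fun k hk => ?_
      have hk : k ≤ N := by simp at hk; omega
      rw [derivative_C_mul, derivative_X_add_C_pow]
      simp only [pow_comp, add_comp, X_comp, C_comp, mul_comp]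
      have e4 : N + 1 - k - 1 = N - k := by omega
      have e5 : (X + C (((N+1:ℕ):ℚ) - k) : ℚ[X]) = X + 1 + C ((N:ℚ) - k) := by
        push_cast
        simp only [map_add, map_sub, map_natCast, map_one]
        ring
      rw [e4, e5, ← mul_assoc, ← mul_assoc, ← C_mul, ← C_mul]
      congr 2
      have := Nat.choose_mul_succ_eq N k
      have h' : ((N.choose k : ℚ)) * (N + 1) = ((N+1).choose k : ℚ) * ((N + 1 - k : ℕ) : ℚ) := by exact_mod_cast this
      calc ((N+1).choose k : ℚ) * ((k:ℚ)+1) ^ (k-1) * ((N + 1 - k : ℕ) : ℚ)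
          = (((N+1).choose k : ℚ) * ((N + 1 - k : ℕ) : ℚ)) * ((k:ℚ)+1) ^ (k-1) := by ring
        _ = _ := by rw [← h']; ring
    have hC := eq_C_of_derivative_eq_zero hd
    have hz : (P - Q).eval (-((N:ℚ)+2)) = 0 := by
      have h0 : Q.eval (-((N:ℚ)+2)) = 0 := by
        rw [hQ]; simp; ring
      rw [eval_sub, h0, sub_zero, hP, eval_finsetSum]
      have hf := congrFun (fwdDiff_iter_pow_eq_zero_of_lt (R := ℚ) (Nat.lt_succ_self N)) 1
      rw [fwdDiff_iter_eq_sum_shift] at hf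
      simp only [Pi.zero_apply] at hf
      rw [← hf]
      refine sum_congr rfl fun k hk => ?_
      have hk : k ≤ N + 1 := by simp at hk; omega
      simp only [eval_mul, eval_C, eval_pow, eval_add, eval_X, nsmul_eq_mul, mul_one, zsmul_eq_mul]
      have e6 : (-((N:ℚ)+2) + (((N+1:ℕ):ℚ) - k)) = (-1) * ((k:ℚ)+1) := by push_cast; ring
      rw [e6, mul_pow]
      rcases k with _ | k
      · simp
      · have e7 : (((k+1:ℕ):ℚ)+1)^N = (((k+1:ℕ):ℚ)+1)^(k+1-1) * (((k+1:ℕ):ℚ)+1)^(N+1-(k+1)) := by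
          rw [← pow_add]; congr 1; omega
        rw [add_comm (1:ℚ), e7]
        push_cast
        ring
    rw [hC, eval_C] at hz
    rw [hz, C_0] at hC
    exact sub_eq_zero.1 hC

lemma abel_num (N : ℕ) :
    ∑ k ∈ range (N+1), ((N.choose k : ℚ) * ((k:ℚ)+1) ^ (k-1)) * ((N - k : ℕ) : ℚ) ^ (N - k) = ((N:ℚ)+1) ^ N := by
  have := congrArg (Polynomial.eval 0) (abel_poly N)
  rw [Polynomial.eval_finsetSum] at this
  simp only [Polynomial.eval_mul, Polynomial.eval_C, Polynomial.eval_pow, Polynomial.eval_add, Polynomial.eval_X, zero_add] at this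
  rw [← this]
  refine sum_congr rfl fun k hk => ?_
  rw [Nat.cast_sub (by simp at hk; omega)]

lemma YZ : Yq * (1 + Zq) = Zq := by
  have hZ1 : ∀ j, PowerSeries.coeff j (1 + Zq) = (j:ℚ)^j / j.factorial := by
    intro j
    rw [map_add, PowerSeries.coeff_one, Zq, PowerSeries.coeff_mk]
    rcases j with _ | j <;> simp
  ext n
  rw [PowerSeries.coeff_mul, Nat.sum_antidiagonal_eq_sum_range_succ_mk]
  rcases n with _ | N
  · simp [Yq, Zq]
  rw [sum_range_succ']
  simp only [hZ1]
  have h0 : PowerSeries.coeff 0 Yq = 0 := by simp [Yq]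
  rw [h0, zero_mul, add_zero]
  have hN := abel_num N
  have : PowerSeries.coeff (N+1) Zq = ((N:ℚ)+1)^N / N.factorial := by
    rw [Zq, PowerSeries.coeff_mk, if_neg (by omega), Nat.factorial_succ]
    push_cast
    field_simp
    ring
  rw [this, ← hN, sum_div]
  refine sum_congr rfl fun k hk => ?_
  have hk : k ≤ N := by simp at hk; omega
  rw [Yq, PowerSeries.coeff_mk, if_neg (by omega), Nat.cast_choose ℚ hk, Nat.add_sub_add_right N 1 k, Nat.factorial_succ]
  have h1 : ((k + 1 : ℕ) : ℚ) ^ (k + 1 - 1) = ((k:ℚ)+1) ^ (k-1) * ((k:ℚ) + 1) := by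
    rcases k with _ | k
    · simp
    · push_cast; simp [pow_succ]
  rw [h1]
  push_cast
  field_simp

lemma theta (f : PowerSeries ℚ) (n : ℕ) :
    PowerSeries.coeff n (PowerSeries.X * PowerSeries.derivative ℚ f) = n * PowerSeries.coeff n f := by
  rcases n with _ | n
  · simp
  · rw [PowerSeries.coeff_succ_X_mul, PowerSeries.coeff_derivative]
    push_cast; ring

lemma theta_Y : PowerSeries.X * PowerSeries.derivative ℚ Yq = Zq := by
  ext n
  rw [theta, Yq, Zq, PowerSeries.coeff_mk, PowerSeries.coeff_mk]
  rcases n with _ | n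
  · simp
  · simp; ring

lemma theta_pow (m n : ℕ) :
    n * PowerSeries.coeff n (Yq ^ (m+1)) = (m+1) * PowerSeries.coeff n (Yq ^ m * Zq) := by
  rw [← theta, Derivation.leibniz_pow, ← theta_Y]
  have : PowerSeries.X * ((m + 1) • Yq ^ (m + 1 - 1) • PowerSeries.derivative ℚ Yq)
     = PowerSeries.C ((m:ℚ)+1) * (Yq ^ m * (PowerSeries.X * PowerSeries.derivative ℚ Yq)) := by
    simp
    ring
  rw [this, PowerSeries.coeff_C_mul]

lemma coeff_YmZ (m n : ℕ) : PowerSeries.coeff n (Yq ^ m * Zq) =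
    if m + 1 ≤ n then (n:ℚ) ^ (n - (m+1)) / (n - (m+1)).factorial else 0 := by
  induction m with
  | zero =>
    rw [pow_zero, one_mul, Zq, PowerSeries.coeff_mk]
    rcases n with _ | n
    · simp
    · simp [Nat.factorial_succ]; field_simp; ring
  | succ m ih =>
    have e : Yq ^ (m+1) * Zq = Yq ^ m * Zq - Yq ^ (m+1) := by
      have := YZ
      linear_combination (Yq ^ m) * this
    rcases Nat.eq_zero_or_pos n with rfl | hn
    · simp [Zq]
    have hn' : (n:ℚ) ≠ 0 := by positivity
    have h1 := theta_pow m n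
    have h2 : PowerSeries.coeff n (Yq ^ (m+1)) = (m+1) * PowerSeries.coeff n (Yq ^ m * Zq) / n := by
      field_simp; linarith
    rw [e, map_sub, h2, ih]
    by_cases hmn : m + 1 + 1 ≤ n
    · rw [if_pos (by omega), if_pos hmn]
      obtain ⟨d, rfl⟩ := Nat.exists_eq_add_of_le hmn
      have : m + 1 + 1 + d - (m+1) = d + 1 := by omega
      rw [this, Nat.add_sub_cancel_left, Nat.factorial_succ, pow_succ]
      push_cast at hn' ⊢
      field_simp
      ring
    · rw [if_neg hmn]
      by_cases h3 : m + 1 ≤ n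
      · obtain rfl : n = m + 1 := by omega
        simp
        field_simp
        simp
      · simp [h3]

lemma coeff_Ym (m n : ℕ) : n * PowerSeries.coeff n (Yq ^ (m+1)) =
    if m + 1 ≤ n then ((m:ℚ) + 1) * ((n:ℚ) ^ (n - (m+1)) / (n - (m+1)).factorial) else 0 := by
  rw [theta_pow, coeff_YmZ]; split_ifs <;> simp

lemma X_dvd_Y : PowerSeries.X ∣ Yq := by
  rw [PowerSeries.X_dvd_iff]; simp [Yq]

lemma S_dvd (N : ℕ) : ∀ k, (PowerSeries.X : PowerSeries ℚ) ^ N ∣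
    (∑ l ∈ range N, (l.choose k : PowerSeries ℚ) * Yq ^ (l+1)) - Zq ^ (k+1) := by
  induction N with
  | zero => simp
  | succ N ih =>
    intro k
    have hYZ := YZ
    rw [sum_range_succ', pow_succ']
    rcases k with _ | k
    · have : (∑ l ∈ range N, (((l+1).choose 0 : ℕ) : PowerSeries ℚ) * Yq ^ (l+1+1)) + (((0:ℕ).choose 0 : ℕ) : PowerSeries ℚ) * Yq ^ (0+1) - Zq ^ (0+1)
          = Yq * ((∑ l ∈ range N, (l.choose 0 : PowerSeries ℚ) * Yq ^ (l+1)) - Zq ^ (0+1)) := by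
        rw [mul_sub, mul_sum]
        have : ∀ l ∈ range N, (((l+1).choose 0 : ℕ) : PowerSeries ℚ) * Yq ^ (l+1+1) = Yq * ((l.choose 0 : PowerSeries ℚ) * Yq ^ (l+1)) := by
          intro l _; simp; ring
        rw [sum_congr rfl this]
        simp
        linear_combination hYZ
      rw [this]
      exact mul_dvd_mul X_dvd_Y (ih 0)
    · have : (∑ l ∈ range N, (((l+1).choose (k+1) : ℕ) : PowerSeries ℚ) * Yq ^ (l+1+1)) + (((0:ℕ).choose (k+1) : ℕ) : PowerSeries ℚ) * Yq ^ (0+1) - Zq ^ (k+1+1)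
          = Yq * (((∑ l ∈ range N, (l.choose k : PowerSeries ℚ) * Yq ^ (l+1)) - Zq ^ (k+1))
            + ((∑ l ∈ range N, (l.choose (k+1) : PowerSeries ℚ) * Yq ^ (l+1)) - Zq ^ (k+1+1))) := by
        have : ∀ l ∈ range N, (((l+1).choose (k+1) : ℕ) : PowerSeries ℚ) * Yq ^ (l+1+1) = Yq * ((l.choose k : PowerSeries ℚ) * Yq ^ (l+1)) + Yq * ((l.choose (k+1) : PowerSeries ℚ) * Yq ^ (l+1)) := by
          intro l _; rw [Nat.choose_succ_succ]; push_cast; ring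
        rw [sum_congr rfl this, sum_add_distrib, ← mul_sum, ← mul_sum]
        simp
        linear_combination (Zq ^ (k+1)) * hYZ
      rw [this]
      exact mul_dvd_mul X_dvd_Y (dvd_add (ih k) (ih (k+1)))

lemma coeff_Z (n k : ℕ) : PowerSeries.coeff n (Zq ^ (k+1)) =
    ∑ l ∈ range n, (l.choose k : ℚ) * PowerSeries.coeff n (Yq ^ (l+1)) := by
  have h := S_dvd (n+1) k
  rw [PowerSeries.X_pow_dvd_iff] at h
  have h := h n (Nat.lt_succ_self n)
  rw [map_sub, sub_eq_zero, map_sum, sum_range_succ] at h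
  have hc : ∀ l, PowerSeries.coeff n ((l.choose k : PowerSeries ℚ) * Yq ^ (l+1)) = (l.choose k : ℚ) * PowerSeries.coeff n (Yq ^ (l+1)) := by
    intro l
    rw [← map_natCast (PowerSeries.C (R := ℚ)), PowerSeries.coeff_C_mul]
  simp only [hc] at h
  rw [← h]
  have : PowerSeries.coeff n (Yq ^ (n+1)) = 0 := by
    have := pow_dvd_pow_of_dvd X_dvd_Y (n+1)
    exact PowerSeries.X_pow_dvd_iff.1 this n (Nat.lt_succ_self n)
  rw [this]; simp
end series

open Classical in
lemma gf_coeff (n : ℕ) (h : ℕ → ℚ) :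
    (∑ G ∈ Finset.univ.filter (fun G : SimpleGraph (Fin n) => G.Connected ∧ G.IsAcyclic),
      ∑ a : Fin n, ∑ b : Fin n, h (G.dist a b)) / n.factorial
      = ∑ l ∈ range n, h l * PowerSeries.coeff n (Yq ^ (l+1)) := by
  rcases Nat.eq_zero_or_pos n with rfl | hn
  · simp
  have hn' : (n:ℚ) ≠ 0 := by positivity
  have hcount := fun l => count_aux (V := Fin n) l
  simp only [Fintype.card_fin] at hcount
  set A : ℕ → Finset (Fin n × Fin n × (Fin n → Fin n)) := fun l =>
    Finset.univ.filter (fun p => RT p.1 p.2.2 ∧ dep p.1 p.2.2 p.2.1 = l) with hA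
  have e1 : (∑ G ∈ Finset.univ.filter (fun G : SimpleGraph (Fin n) => G.Connected ∧ G.IsAcyclic),
      ∑ a : Fin n, ∑ b : Fin n, h (G.dist a b))
      = ∑ p ∈ Finset.univ.filter (fun p : Fin n × Fin n × (Fin n → Fin n) => RT p.1 p.2.2), h (dep p.1 p.2.2 p.2.1) := by
    rw [sum_comm, sum_filter, Fintype.sum_prod_type]
    refine sum_congr rfl fun a _ => ?_
    rw [sum_comm, Fintype.sum_prod_type]
    refine sum_congr rfl fun b _ => ?_
    rw [sum_tree, sum_filter]
  have hlt : ∀ p ∈ Finset.univ.filter (fun p : Fin n × Fin n × (Fin n → Fin n) => RT p.1 p.2.2),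
      dep p.1 p.2.2 p.2.1 ∈ range n := by
    intro p hp
    rw [mem_range]
    by_contra hlt
    push Not at hlt
    have h1 := hcount (dep p.1 p.2.2 p.2.1)
    rw [Nat.descFactorial_of_lt (by omega), zero_mul] at h1
    have h2 : (A (dep p.1 p.2.2 p.2.1)).card = 0 := by
      rcases Nat.mul_eq_zero.1 h1 with h | h
      · exact h
      · omega
    rw [card_eq_zero] at h2
    have h3 : p ∈ A (dep p.1 p.2.2 p.2.1) := by
      simp only [hA, mem_filter, mem_univ, true_and, and_true]
      exact (mem_filter.1 hp).2
    rw [h2] at h3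
    simp at h3
  rw [e1, ← sum_fiberwise_of_maps_to hlt, sum_div]
  refine sum_congr rfl fun l hl => ?_
  have hl : l + 1 ≤ n := by simp at hl; omega
  rw [filter_filter]
  have e2 : ∑ p ∈ Finset.univ.filter (fun p : Fin n × Fin n × (Fin n → Fin n) => RT p.1 p.2.2 ∧ dep p.1 p.2.2 p.2.1 = l), h (dep p.1 p.2.2 p.2.1)
      = (A l).card * h l := by
    rw [sum_congr rfl (fun p hp => by rw [(mem_filter.1 hp).2.2]), sum_const, nsmul_eq_mul]
  rw [e2]
  have h1 := hcount l
  have h2 := coeff_Ym l n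
  rw [if_pos hl] at h2
  have h3 : ((A l).card : ℚ) * n = (n.descFactorial (l+1) : ℚ) * (((l:ℚ)+1) * (n:ℚ) ^ (n - (l+1))) := by exact_mod_cast h1
  have h4 : ((n - (l+1)).factorial : ℚ) * (n.descFactorial (l+1) : ℚ) = n.factorial := by
    exact_mod_cast Nat.factorial_mul_descFactorial hl
  have h5 : ((n - (l+1)).factorial : ℚ) ≠ 0 := by positivity
  have h6 : (n.descFactorial (l+1) : ℚ) ≠ 0 := by
    intro h0; rw [h0, mul_zero] at h4; exact (by positivity : (n.factorial : ℚ) ≠ 0) h4.symm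
  have h7 : ((A l).card : ℚ) / n.factorial = PowerSeries.coeff n (Yq ^ (l+1)) := by
    apply mul_left_cancel₀ hn'
    rw [h2, ← h4]
    field_simp
    linarith
  rw [← h7]; ring

/-- generating function of a distance statistic -/
noncomputable def gfS (h : ℕ → ℚ) : PowerSeries ℚ :=
  PowerSeries.mk fun n => ∑ l ∈ range n, h l * PowerSeries.coeff n (Yq ^ (l+1))

lemma gfS_mem (k : ℕ) : ∀ j, gfS (fun l => (l:ℚ)^k * (l.choose j : ℚ)) ∈ Algebra.adjoin ℚ {Yq, Zq} := by
  induction k with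
  | zero =>
    intro j
    have : gfS (fun l => (l:ℚ)^0 * (l.choose j : ℚ)) = Zq ^ (j+1) := by
      ext n
      rw [coeff_Z, gfS, PowerSeries.coeff_mk]
      simp
    rw [this]
    exact Subalgebra.pow_mem _ (Algebra.subset_adjoin (by simp)) _
  | succ k ih =>
    intro j
    have : gfS (fun l => (l:ℚ)^(k+1) * (l.choose j : ℚ)) =
        ((j:ℚ)+1) • gfS (fun l => (l:ℚ)^k * (l.choose (j+1) : ℚ)) + (j:ℚ) • gfS (fun l => (l:ℚ)^k * (l.choose j : ℚ)) := by
      ext n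
      simp only [gfS, map_add, map_smul, PowerSeries.coeff_mk, smul_eq_mul, mul_sum]
      rw [← sum_add_distrib]
      refine sum_congr rfl fun l _ => ?_
      have h2 : (l.choose (j+1) : ℚ) * (j+1) + l.choose j * j = l.choose j * l := by
        rcases le_or_gt j l with hjl | hjl
        · have h1 := Nat.choose_succ_right_eq l j
          have h1' : (l.choose (j+1) : ℚ) * (j+1) = l.choose j * ((l - j : ℕ) : ℚ) := by exact_mod_cast h1
          rw [h1', Nat.cast_sub hjl]; ring
        · rw [Nat.choose_eq_zero_of_lt hjl, Nat.choose_eq_zero_of_lt (by omega)]; simp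
      linear_combination (-(l:ℚ)^k * PowerSeries.coeff n (Yq ^ (l+1))) * h2
    rw [this]
    exact Subalgebra.add_mem _ (Subalgebra.smul_mem _ (ih _) _) (Subalgebra.smul_mem _ (ih _) _)

end dendro

/-- For every `k`, the series `Σ_{n≥1} (m_{n,k}/n!) qⁿ` and `Σ_{n≥1} (p_{n,k}/n!) qⁿ`
lie in `𝒜 = ℚ[Y,Z]`. -/
theorem dendrology (k : ℕ) :
    (PowerSeries.mk fun n => (mCayley n k : ℚ) / n.factorial) ∈
      Algebra.adjoin ℚ {Yq, Zq} ∧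
    (PowerSeries.mk fun n => (pCayley n k : ℚ) / n.factorial) ∈
      Algebra.adjoin ℚ {Yq, Zq} := by
  constructor
  · have h := gfS_mem k 0
    convert h using 1
    ext n
    rw [PowerSeries.coeff_mk, gfS, PowerSeries.coeff_mk, ← gf_coeff, mCayley]
    push_cast
    simp
  · have h := gfS_mem 0 k
    convert h using 1
    ext n
    rw [PowerSeries.coeff_mk, gfS, PowerSeries.coeff_mk, ← gf_coeff, pCayley]
    push_cast
    simp
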